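/- arXiv:1901.09736 — 2 statements merged into one kernel-verified Lean document; each statement's English description precedes it below -/
import Mathlib

section
/- Under the Entropy Setup, with ρ̄ ∈ (0,1], there exists a constant M > 0 depending only on γ such that for all ρ > 0 and m ∈ ℝ with u = m/ρ, |η̃(ρ,m)| + ρ|η̃_ρ(ρ,m) + u η̃_m(ρ,m)| ≤ M(ρ|u|² + ρ + ρ^γ). -/
open MeasureTheory Real Set

noncomputable section

/-- The Lions–Perthame–Tadmor weak entropy
`η̌(ρ,m) = ∫_ℝ ½ s|s| [ρ^{2θ} − (m/ρ−s)²]_+^{(3−γ)/(2(γ−1))} ds`, with `2θ = γ−1`. -/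
def etaCheck (γ ρ m : ℝ) : ℝ :=
  ∫ s : ℝ, (1/2) * s * |s| *
    (max (ρ ^ (γ - 1) - (m / ρ - s) ^ (2:ℕ)) 0) ^ ((3 - γ) / (2 * (γ - 1)))

/-- The associated weak entropy flux
`q̌(ρ,m) = ∫_ℝ ½ s|s| (θs + (1−θ)m/ρ) [ρ^{2θ} − (m/ρ−s)²]_+^{(3−γ)/(2(γ−1))} ds`. -/
def qCheck (γ ρ m : ℝ) : ℝ :=
  ∫ s : ℝ, (1/2) * s * |s| * (((γ - 1)/2) * s + (1 - (γ - 1)/2) * (m / ρ)) *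
    (max (ρ ^ (γ - 1) - (m / ρ - s) ^ (2:ℕ)) 0) ^ ((3 - γ) / (2 * (γ - 1)))

/-- Partial derivative `η̌_ρ` in the variables `(ρ,m)`. -/
def etaCheckRho (γ ρ m : ℝ) : ℝ := deriv (fun x => etaCheck γ x m) ρ

/-- Partial derivative `η̌_m` in the variables `(ρ,m)`. -/
def etaCheckM (γ ρ m : ℝ) : ℝ := deriv (fun y => etaCheck γ ρ y) m

/-- The modified entropy `η̃(ρ,m) = η̌(ρ,m) − η̌_ρ(ρ̄,0)(ρ−ρ̄) − η̌_m(ρ̄,0)m`. -/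
def etaTilde (γ ρbar ρ m : ℝ) : ℝ :=
  etaCheck γ ρ m - etaCheckRho γ ρbar 0 * (ρ - ρbar) - etaCheckM γ ρbar 0 * m

/-- The modified entropy flux
`q̃(ρ,m) = q̌(ρ,m) − η̌_ρ(ρ̄,0)m − η̌_m(ρ̄,0)(m²/ρ + p(ρ))`, `p(ρ) = κρ^γ`. -/
def qTilde (γ κ ρbar ρ m : ℝ) : ℝ :=
  qCheck γ ρ m - etaCheckRho γ ρbar 0 * m
    - etaCheckM γ ρbar 0 * (m ^ (2:ℕ) / ρ + κ * ρ ^ γ)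

/-- `η̃_ρ` in the variables `(ρ,m)`. -/
def etaTildeRho (γ ρbar ρ m : ℝ) : ℝ := deriv (fun x => etaTilde γ ρbar x m) ρ

/-- `η̃_m` in the variables `(ρ,m)`. -/
def etaTildeM (γ ρbar ρ m : ℝ) : ℝ := deriv (fun y => etaTilde γ ρbar ρ y) m

/-- The profile `(1 - t²)_+^r` of the entropy kernel. -/
def kernelProfile (r t : ℝ) : ℝ := (max (1 - t ^ (2:ℕ)) 0) ^ r

/-- The entropy per unit mass as a function of the velocity `p.1` and the sound speed `p.2`. -/
def specificEntropy (r : ℝ) (p : ℝ × ℝ) : ℝ :=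
  ∫ t : ℝ, (1/2) * ((p.1 + p.2 * t) * |p.1 + p.2 * t|) * kernelProfile r t

lemma kernelProfile_nonneg (r t : ℝ) : 0 ≤ kernelProfile r t :=
  Real.rpow_nonneg (le_max_right _ _) _

lemma kernelProfile_neg (r t : ℝ) : kernelProfile r (-t) = kernelProfile r t := by
  simp [kernelProfile]

lemma kernelProfile_eq_zero {r t : ℝ} (hr : r ≠ 0) (ht : 1 ≤ |t|) : kernelProfile r t = 0 := by
  have h : 1 - t ^ 2 ≤ 0 := by
    have := sq_abs t
    nlinarith
  rw [kernelProfile, max_eq_right h, Real.zero_rpow hr]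

lemma support_kernelProfile_subset {r : ℝ} (hr : r ≠ 0) :
    Function.support (kernelProfile r) ⊆ Icc (-1) 1 := by
  intro t ht
  by_contra h
  refine ht (kernelProfile_eq_zero hr ?_)
  by_contra h1
  exact h (abs_le.1 (not_le.1 h1).le)

lemma measurable_kernelProfile (r : ℝ) : Measurable (kernelProfile r) := by
  unfold kernelProfile
  fun_prop

lemma kernelProfile_le {r t : ℝ} (ht : t ∈ Ioo (-1 : ℝ) 1) :
    kernelProfile r t ≤ 1 + (1 - t) ^ r + (1 + t) ^ r := by
  obtain ⟨h1, h2⟩ := ht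
  have hpos : 0 < 1 - t ^ 2 := by nlinarith
  have ha : 0 ≤ (1 - t) ^ r := Real.rpow_nonneg (by linarith) _
  have hb : 0 ≤ (1 + t) ^ r := Real.rpow_nonneg (by linarith) _
  rw [kernelProfile, max_eq_left hpos.le]
  rcases le_total 0 r with hr | hr
  · have : (1 - t ^ 2) ^ r ≤ 1 := Real.rpow_le_one hpos.le (by nlinarith) hr
    linarith
  · rcases le_total 0 t with h0 | h0
    · have : (1 - t ^ 2) ^ r ≤ (1 - t) ^ r :=
        Real.rpow_le_rpow_of_nonpos (by linarith) (by nlinarith) hr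
      linarith
    · have : (1 - t ^ 2) ^ r ≤ (1 + t) ^ r :=
        Real.rpow_le_rpow_of_nonpos (by linarith) (by nlinarith) hr
      linarith

lemma integrableOn_kernelProfile {r : ℝ} (hr : -1 < r) :
    IntegrableOn (kernelProfile r) (Icc (-1) 1) := by
  rw [integrableOn_Icc_iff_integrableOn_Ioo]
  have h1 : IntervalIntegrable (fun t : ℝ => (1 - t) ^ r) volume (-1) 1 := by
    have := (intervalIntegral.intervalIntegrable_rpow' (a := 2) (b := 0) hr).comp_sub_left 1
    norm_num at this
    exact this
  have h2 : IntervalIntegrable (fun t : ℝ => (1 + t) ^ r) volume (-1) 1 := by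
    have := (intervalIntegral.intervalIntegrable_rpow' (a := 0) (b := 2) hr).comp_add_left 1
    norm_num at this
    exact this
  have h3 : IntervalIntegrable (fun t : ℝ => 1 + (1 - t) ^ r + (1 + t) ^ r) volume (-1) 1 :=
    (intervalIntegrable_const.add h1).add h2
  rw [intervalIntegrable_iff_integrableOn_Ioo_of_le (by norm_num)] at h3
  refine Integrable.mono' h3 (measurable_kernelProfile r).aestronglyMeasurable ?_
  refine (ae_restrict_iff' measurableSet_Ioo).2 (Filter.Eventually.of_forall fun t ht => ?_)
  rw [Real.norm_of_nonneg (kernelProfile_nonneg r t)]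
  exact kernelProfile_le ht

lemma integrable_mul_kernelProfile {r : ℝ} (hr : -1 < r) (hr0 : r ≠ 0) {g : ℝ → ℝ}
    (hg : Continuous g) : Integrable fun t => g t * kernelProfile r t := by
  rw [← integrableOn_iff_integrable_of_support_subset (s := Icc (-1) 1)]
  · exact (integrableOn_kernelProfile hr).continuousOn_mul hg.continuousOn isCompact_Icc
  · exact (Function.support_mul_subset_right _ _).trans (support_kernelProfile_subset hr0)

lemma integrable_kernelProfile {r : ℝ} (hr : -1 < r) (hr0 : r ≠ 0) :
    Integrable (kernelProfile r) := by
  simpa using integrable_mul_kernelProfile hr hr0 (continuous_const (y := (1 : ℝ)))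

/-- A moment against the kernel profile is bounded by the values of the weight on `[-1, 1]`. -/
lemma abs_integral_mul_kernelProfile_le {r : ℝ} (hr : -1 < r) (hr0 : r ≠ 0) {g : ℝ → ℝ} {C : ℝ}
    (hC : ∀ t, |t| ≤ 1 → |g t| ≤ C) :
    |∫ t, g t * kernelProfile r t| ≤ C * ∫ t, kernelProfile r t := by
  rw [← integral_const_mul, ← Real.norm_eq_abs]
  refine norm_integral_le_of_norm_le ((integrable_kernelProfile hr hr0).const_mul C)
    (Filter.Eventually.of_forall fun t => ?_)
  rw [Real.norm_eq_abs, abs_mul, abs_of_nonneg (kernelProfile_nonneg r t)]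
  rcases le_total |t| 1 with ht | ht
  · exact mul_le_mul_of_nonneg_right (hC t ht) (kernelProfile_nonneg r t)
  · simp [kernelProfile_eq_zero hr0 ht]

lemma integral_eq_zero_of_odd {f : ℝ → ℝ} (hf : ∀ x, f (-x) = -f x) : ∫ x, f x = 0 := by
  have h := integral_neg_eq_self f volume
  simp only [hf, integral_neg] at h
  linarith

/-- Second order Taylor estimate for `s ↦ s|s|`. -/
lemma abs_mul_abs_sub_le (a b : ℝ) :
    |b * |b| - a * |a| - 2 * |a| * (b - a)| ≤ (b - a) ^ 2 := by
  rw [abs_le]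
  rcases abs_cases a with ⟨h, _⟩ | ⟨h, _⟩ <;> rcases abs_cases b with ⟨h', _⟩ | ⟨h', _⟩ <;>
    rw [h, h'] <;> constructor <;> nlinarith

lemma specificEntropy_taylor {r : ℝ} (hr : -1 < r) (hr0 : r ≠ 0) (p q : ℝ × ℝ) :
    |specificEntropy r q - specificEntropy r p
      - ((∫ t, |p.1 + p.2 * t| * kernelProfile r t) * (q.1 - p.1)
        + (∫ t, t * |p.1 + p.2 * t| * kernelProfile r t) * (q.2 - p.2))|
      ≤ 2 * (∫ t, kernelProfile r t) * ‖q - p‖ ^ 2 := by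
  have e : specificEntropy r q - specificEntropy r p
      - ((∫ t, |p.1 + p.2 * t| * kernelProfile r t) * (q.1 - p.1)
        + (∫ t, t * |p.1 + p.2 * t| * kernelProfile r t) * (q.2 - p.2))
      = ∫ t, ((1/2) * ((q.1 + q.2 * t) * |q.1 + q.2 * t| - (p.1 + p.2 * t) * |p.1 + p.2 * t|
        - 2 * |p.1 + p.2 * t| * ((q.1 + q.2 * t) - (p.1 + p.2 * t)))) * kernelProfile r t := by
    unfold specificEntropy
    rw [← integral_mul_const, ← integral_mul_const, ← integral_sub, ← integral_add,
      ← integral_sub]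
    · congr 1
      ext t
      ring
    · exact (integrable_mul_kernelProfile hr hr0 (by fun_prop)).sub
        (integrable_mul_kernelProfile hr hr0 (by fun_prop))
    · exact ((integrable_mul_kernelProfile hr hr0 (by fun_prop)).mul_const _).add
        ((integrable_mul_kernelProfile hr hr0 (by fun_prop)).mul_const _)
    · exact (integrable_mul_kernelProfile hr hr0 (by fun_prop)).mul_const _
    · exact (integrable_mul_kernelProfile hr hr0 (by fun_prop)).mul_const _
    · exact integrable_mul_kernelProfile hr hr0 (by fun_prop)
    · exact integrable_mul_kernelProfile hr hr0 (by fun_prop)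
  rw [e]
  have key := abs_integral_mul_kernelProfile_le hr hr0 (C := 2 * ‖q - p‖ ^ 2)
    (g := fun t => (1/2) * ((q.1 + q.2 * t) * |q.1 + q.2 * t| - (p.1 + p.2 * t) * |p.1 + p.2 * t|
        - 2 * |p.1 + p.2 * t| * ((q.1 + q.2 * t) - (p.1 + p.2 * t)))) ?_
  · exact key.trans_eq (by ring)
  intro t ht
  have h1 : |q.1 - p.1| ≤ ‖q - p‖ := norm_fst_le (q - p)
  have h2 : |q.2 - p.2| ≤ ‖q - p‖ := norm_snd_le (q - p)
  have h3 : |(q.1 + q.2 * t) - (p.1 + p.2 * t)| ≤ 2 * ‖q - p‖ := by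
    calc |(q.1 + q.2 * t) - (p.1 + p.2 * t)| = |(q.1 - p.1) + (q.2 - p.2) * t| := by ring_nf
      _ ≤ |q.1 - p.1| + |(q.2 - p.2) * t| := abs_add_le _ _
      _ ≤ ‖q - p‖ + ‖q - p‖ * 1 := by
          rw [abs_mul]
          gcongr
      _ = 2 * ‖q - p‖ := by ring
  have h4 := abs_mul_abs_sub_le (p.1 + p.2 * t) (q.1 + q.2 * t)
  have h5 : ((q.1 + q.2 * t) - (p.1 + p.2 * t)) ^ 2 ≤ (2 * ‖q - p‖) ^ 2 := sq_le_sq.2 (by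
    rwa [abs_of_nonneg (by positivity : 0 ≤ 2 * ‖q - p‖)])
  rw [abs_mul, abs_of_pos (by norm_num : (0:ℝ) < 1/2)]
  linarith

lemma hasFDerivAt_specificEntropy {r : ℝ} (hr : -1 < r) (hr0 : r ≠ 0) (p : ℝ × ℝ) :
    HasFDerivAt (specificEntropy r)
      ((∫ t, |p.1 + p.2 * t| * kernelProfile r t) • ContinuousLinearMap.fst ℝ ℝ ℝ
        + (∫ t, t * |p.1 + p.2 * t| * kernelProfile r t) • ContinuousLinearMap.snd ℝ ℝ ℝ) p := by
  refine HasFDerivAt.of_isLittleO ?_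
  have hO : (fun q : ℝ × ℝ => specificEntropy r q - specificEntropy r p
      - ((∫ t, |p.1 + p.2 * t| * kernelProfile r t) • ContinuousLinearMap.fst ℝ ℝ ℝ
        + (∫ t, t * |p.1 + p.2 * t| * kernelProfile r t) • ContinuousLinearMap.snd ℝ ℝ ℝ)
          (q - p)) =O[nhds p] fun q => ‖q - p‖ ^ 2 := by
    refine Asymptotics.IsBigO.of_bound (2 * ∫ t, kernelProfile r t)
      (Filter.Eventually.of_forall fun q => ?_)
    rw [Real.norm_eq_abs, Real.norm_of_nonneg (by positivity)]
    exact specificEntropy_taylor hr hr0 p q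
  exact hO.trans_isLittleO (Asymptotics.isLittleO_pow_sub_sub p one_lt_two)

lemma abs_add_mul_le {u c t : ℝ} (hc : 0 ≤ c) (ht : |t| ≤ 1) : |u + c * t| ≤ |u| + c := by
  refine (abs_add_le _ _).trans ?_
  rw [abs_mul, abs_of_nonneg hc]
  gcongr
  exact mul_le_of_le_one_right hc ht

lemma abs_specificEntropy_le {r : ℝ} (hr : -1 < r) (hr0 : r ≠ 0) {u c : ℝ} (hc : 0 ≤ c) :
    |specificEntropy r (u, c)| ≤ (u ^ 2 + c ^ 2) * ∫ t, kernelProfile r t := by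
  refine abs_integral_mul_kernelProfile_le hr hr0 fun t ht => ?_
  have h := abs_add_mul_le (u := u) hc ht
  rw [abs_mul, abs_mul, abs_abs, abs_of_pos (by norm_num : (0:ℝ) < 1/2)]
  nlinarith [sq_nonneg (|u| - c), sq_abs u, abs_nonneg (u + c * t),
    mul_self_le_mul_self (abs_nonneg (u + c * t)) h]

lemma abs_mul_integral_le {r : ℝ} (hr : -1 < r) (hr0 : r ≠ 0) {u c : ℝ} (hc : 0 ≤ c) :
    |c * ∫ t, t * |u + c * t| * kernelProfile r t|
      ≤ 2 * (u ^ 2 + c ^ 2) * ∫ t, kernelProfile r t := by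
  have h : |∫ t, t * |u + c * t| * kernelProfile r t| ≤ (|u| + c) * ∫ t, kernelProfile r t := by
    refine abs_integral_mul_kernelProfile_le hr hr0 fun t ht => ?_
    have h := abs_add_mul_le (u := u) hc ht
    rw [abs_mul, abs_abs]
    nlinarith [abs_nonneg (u + c * t)]
  have hW : 0 ≤ ∫ t, kernelProfile r t := integral_nonneg (kernelProfile_nonneg r)
  rw [abs_mul, abs_of_nonneg hc]
  calc c * |∫ t, t * |u + c * t| * kernelProfile r t|
      ≤ c * ((|u| + c) * ∫ t, kernelProfile r t) := by gcongr
    _ = (c * (|u| + c)) * ∫ t, kernelProfile r t := by ring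
    _ ≤ _ := by
        refine mul_le_mul_of_nonneg_right ?_ hW
        nlinarith [sq_nonneg (|u| - c), sq_abs u]

/-- The change of variables `s = m/ρ + ρ^θ t`. -/
lemma etaCheck_eq {γ ρ : ℝ} (hγ : 1 < γ) (hρ : 0 < ρ) (m : ℝ) :
    etaCheck γ ρ m
      = ρ * specificEntropy ((3 - γ) / (2 * (γ - 1))) (m / ρ, ρ ^ ((γ - 1) / 2)) := by
  set r := (3 - γ) / (2 * (γ - 1)) with hr
  set c := ρ ^ ((γ - 1) / 2) with hc
  have hcpos : 0 < c := Real.rpow_pos_of_pos hρ _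
  have hc2 : ρ ^ (γ - 1) = c ^ 2 := by
    rw [hc, ← Real.rpow_natCast, ← Real.rpow_mul hρ.le]
    congr 1
    push_cast
    ring
  have hcr : c * (c ^ 2) ^ r = ρ := by
    rw [← hc2, hc, ← Real.rpow_mul hρ.le, ← Real.rpow_add hρ]
    have : (γ - 1) / 2 + (γ - 1) * r = 1 := by
      rw [hr]
      have : γ - 1 ≠ 0 := by linarith
      field_simp
      ring
    rw [this, Real.rpow_one]
  set h : ℝ → ℝ := fun s => (1/2) * s * |s| * (max (c ^ 2 - (m / ρ - s) ^ (2:ℕ)) 0) ^ r with hh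
  have hsub : ∫ s, h s = c * ∫ t, h (m / ρ + c * t) := by
    rw [Measure.integral_comp_mul_left (fun s => h (m / ρ + s)) c,
      integral_add_left_eq_self h (m / ρ), abs_of_pos (inv_pos.2 hcpos), smul_eq_mul,
      mul_inv_cancel_left₀ hcpos.ne']
  have hE : etaCheck γ ρ m = ∫ s, h s := by
    unfold etaCheck
    rw [hc2]
  rw [hE, hsub, specificEntropy, ← integral_const_mul, ← integral_const_mul]
  congr 1
  ext t
  have hmax : max (c ^ 2 - (m / ρ - (m / ρ + c * t)) ^ 2) 0 = c ^ 2 * max (1 - t ^ 2) 0 := by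
    rw [mul_max_of_nonneg _ _ (sq_nonneg c)]
    congr 1 <;> ring
  simp only [hh, kernelProfile]
  rw [hmax, Real.mul_rpow (sq_nonneg c) (le_max_right _ _)]
  linear_combination (1/2) * (m / ρ + c * t) * |m / ρ + c * t| * (max (1 - t ^ 2) 0) ^ r * hcr

lemma neg_one_lt_kernelExponent {γ : ℝ} (hγ : 1 < γ) : -1 < (3 - γ) / (2 * (γ - 1)) := by
  rw [lt_div_iff₀ (by linarith)]
  linarith

lemma kernelExponent_ne_zero {γ : ℝ} (hγ : 1 < γ) (hγ3 : γ ≠ 3) :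
    (3 - γ) / (2 * (γ - 1)) ≠ 0 :=
  div_ne_zero (sub_ne_zero.2 hγ3.symm) (by linarith)

lemma hasDerivAt_etaCheck_m {γ ρ : ℝ} (hγ : 1 < γ) (hγ3 : γ ≠ 3) (hρ : 0 < ρ) (m : ℝ) :
    HasDerivAt (fun y => etaCheck γ ρ y)
      (∫ t, |m / ρ + ρ ^ ((γ - 1) / 2) * t| * kernelProfile ((3 - γ) / (2 * (γ - 1))) t) m := by
  have hF := hasFDerivAt_specificEntropy (neg_one_lt_kernelExponent hγ)
    (kernelExponent_ne_zero hγ hγ3) (m / ρ, ρ ^ ((γ - 1) / 2))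
  have hcurve : HasDerivAt (fun y : ℝ => (y / ρ, ρ ^ ((γ - 1) / 2))) (1 / ρ, 0) m :=
    ((hasDerivAt_id m).div_const ρ).prodMk (hasDerivAt_const m _)
  have h := (hF.comp_hasDerivAt m hcurve).const_mul ρ
  simp only [etaCheck_eq hγ hρ]
  refine h.congr_deriv ?_
  simp only [add_apply, smul_apply,
    ContinuousLinearMap.coe_fst', ContinuousLinearMap.coe_snd', smul_eq_mul]
  field_simp
  ring

lemma hasDerivAt_etaCheck_rho {γ ρ : ℝ} (hγ : 1 < γ) (hγ3 : γ ≠ 3) (hρ : 0 < ρ) (m : ℝ) :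
    HasDerivAt (fun x => etaCheck γ x m)
      (specificEntropy ((3 - γ) / (2 * (γ - 1))) (m / ρ, ρ ^ ((γ - 1) / 2))
        - m / ρ * (∫ t, |m / ρ + ρ ^ ((γ - 1) / 2) * t|
          * kernelProfile ((3 - γ) / (2 * (γ - 1))) t)
        + (γ - 1) / 2 * (ρ ^ ((γ - 1) / 2) * ∫ t, t * |m / ρ + ρ ^ ((γ - 1) / 2) * t|
          * kernelProfile ((3 - γ) / (2 * (γ - 1))) t)) ρ := by
  have hF := hasFDerivAt_specificEntropy (neg_one_lt_kernelExponent hγ)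
    (kernelExponent_ne_zero hγ hγ3) (m / ρ, ρ ^ ((γ - 1) / 2))
  have hinv : HasDerivAt (fun x : ℝ => m / x) (-(m / ρ ^ 2)) ρ := by
    refine ((hasDerivAt_inv hρ.ne').const_mul m).congr_deriv ?_
    ring
  have hpow : HasDerivAt (fun x : ℝ => x ^ ((γ - 1) / 2))
      ((γ - 1) / 2 * (ρ ^ ((γ - 1) / 2) / ρ)) ρ := by
    refine (Real.hasDerivAt_rpow_const (p := (γ - 1) / 2) (Or.inl hρ.ne')).congr_deriv ?_
    rw [Real.rpow_sub_one hρ.ne']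
  have h := (hasDerivAt_id ρ).mul
    (hF.comp_hasDerivAt ρ (f := fun x : ℝ => (m / x, x ^ ((γ - 1) / 2))) (hinv.prodMk hpow))
  refine (h.congr_of_eventuallyEq ?_).congr_deriv ?_
  · filter_upwards [lt_mem_nhds hρ] with x hx
    exact etaCheck_eq hγ hx m
  simp only [add_apply, smul_apply,
    ContinuousLinearMap.coe_fst', ContinuousLinearMap.coe_snd', smul_eq_mul, id, Function.comp]
  field_simp
  ring

lemma etaCheckRho_zero {γ ρ : ℝ} (hγ : 1 < γ) (hγ3 : γ ≠ 3) (hρ : 0 < ρ) :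
    etaCheckRho γ ρ 0 = 0 := by
  rw [etaCheckRho, (hasDerivAt_etaCheck_rho hγ hγ3 hρ 0).deriv, specificEntropy,
    integral_eq_zero_of_odd, integral_eq_zero_of_odd (f := fun t => t * _ * _)]
  · simp
  · intro t
    simp [kernelProfile_neg]
  · intro t
    simp [kernelProfile_neg]

lemma abs_etaCheckM_zero_le {γ ρ : ℝ} (hγ : 1 < γ) (hγ3 : γ ≠ 3) (hρ : 0 < ρ) (hρ1 : ρ ≤ 1) :
    |etaCheckM γ ρ 0| ≤ ∫ t, kernelProfile ((3 - γ) / (2 * (γ - 1))) t := by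
  rw [etaCheckM, (hasDerivAt_etaCheck_m hγ hγ3 hρ 0).deriv]
  refine (abs_integral_mul_kernelProfile_le (C := 1) (neg_one_lt_kernelExponent hγ)
    (kernelExponent_ne_zero hγ hγ3) fun t ht => ?_).trans_eq (one_mul _)
  have hc : ρ ^ ((γ - 1) / 2) ≤ 1 := Real.rpow_le_one hρ.le hρ1 (by linarith)
  have := abs_add_mul_le (u := 0 / ρ) (Real.rpow_nonneg hρ.le ((γ - 1) / 2)) ht
  rw [abs_abs]
  simp only [zero_div, abs_zero] at *
  linarith

/-- At `γ = 3` the kernel is `x ^ 0 = 1` everywhere, so the integrand is odd. -/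
lemma etaCheck_three (ρ m : ℝ) : etaCheck 3 ρ m = 0 := by
  refine integral_eq_zero_of_odd fun s => ?_
  norm_num

lemma abs_etaTilde_add_le {γ : ℝ} (hγ : 1 < γ) (hγ3 : γ ≠ 3) {ρbar ρ : ℝ}
    (hρbar : ρbar ∈ Ioc (0:ℝ) 1) (hρ : 0 < ρ) (m : ℝ) :
    |etaTilde γ ρbar ρ m| + ρ * |etaTildeRho γ ρbar ρ m + (m / ρ) * etaTildeM γ ρbar ρ m|
      ≤ (4 + (γ - 1)) * (∫ t, kernelProfile ((3 - γ) / (2 * (γ - 1))) t)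
        * (ρ * |m / ρ| ^ (2:ℕ) + ρ + ρ ^ γ) := by
  have hA := abs_etaCheckM_zero_le hγ hγ3 hρbar.1 hρbar.2
  have hη : ∀ x y, etaTilde γ ρbar x y = etaCheck γ x y - etaCheckM γ ρbar 0 * y := fun x y => by
    rw [etaTilde, etaCheckRho_zero hγ hγ3 hρbar.1]
    ring
  have hηρ := ((hasDerivAt_etaCheck_rho hγ hγ3 hρ m).sub_const (etaCheckM γ ρbar 0 * m)).deriv
  have hηm := ((hasDerivAt_etaCheck_m hγ hγ3 hρ m).sub
    ((hasDerivAt_id m).const_mul (etaCheckM γ ρbar 0))).deriv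
  have hc : 0 ≤ ρ ^ ((γ - 1) / 2) := Real.rpow_nonneg hρ.le _
  have hG := abs_specificEntropy_le (u := m / ρ) (neg_one_lt_kernelExponent hγ)
    (kernelExponent_ne_zero hγ hγ3) hc
  have hGc := abs_mul_integral_le (u := m / ρ) (neg_one_lt_kernelExponent hγ)
    (kernelExponent_ne_zero hγ hγ3) hc
  have hργ : ρ ^ γ = ρ * (ρ ^ ((γ - 1) / 2)) ^ 2 := by
    rw [← Real.rpow_natCast, ← Real.rpow_mul hρ.le, mul_comm, ← Real.rpow_add_one hρ.ne']
    congr 1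
    push_cast
    ring
  have hm : m = ρ * (m / ρ) := by field_simp
  have hρ' : etaTildeRho γ ρbar ρ m
      = deriv (fun x => etaCheck γ x m - etaCheckM γ ρbar 0 * m) ρ := by
    simp only [etaTildeRho, hη]
  have hm' : etaTildeM γ ρbar ρ m
      = deriv ((fun y => etaCheck γ ρ y) - fun y => etaCheckM γ ρbar 0 * id y) m := by
    simp only [etaTildeM, hη]
    rfl
  rw [hρ', hm', hηρ, hηm, hη, etaCheck_eq hγ hρ, hργ, sq_abs]
  clear hρ' hm' hηρ hηm hη
  generalize etaCheckM γ ρbar 0 = A at *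
  generalize (∫ t, kernelProfile ((3 - γ) / (2 * (γ - 1))) t) = W at *
  generalize specificEntropy _ _ = G at *
  generalize ρ ^ ((γ - 1) / 2) = c at *
  generalize c * ∫ t, t * |m / ρ + c * t| * kernelProfile ((3 - γ) / (2 * (γ - 1))) t = K at *
  generalize (∫ t, |m / ρ + c * t| * kernelProfile ((3 - γ) / (2 * (γ - 1))) t) = J at *
  generalize m / ρ = u at *
  have hW : 0 ≤ W := (abs_nonneg A).trans hA
  have hAu : |A * u| ≤ W * (1 + u ^ 2) := by
    rw [abs_mul]
    refine mul_le_mul hA ?_ (abs_nonneg u) hW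
    nlinarith [sq_abs u, sq_nonneg (|u| - 1)]
  have h1 : |ρ * G - A * m| ≤ ρ * (|G| + |A * u|) := by
    rw [hm, show ρ * G - A * (ρ * u) = ρ * (G - A * u) by ring, abs_mul, abs_of_pos hρ]
    gcongr
    exact abs_sub _ _
  have h2 : |G - u * J + (γ - 1) / 2 * K + u * (J - A * 1)|
      ≤ |G| + (γ - 1) / 2 * |K| + |A * u| := by
    rw [show G - u * J + (γ - 1) / 2 * K + u * (J - A * 1)
      = G + (γ - 1) / 2 * K - A * u by ring]
    refine (abs_sub _ _).trans (add_le_add_left ((abs_add_le _ _).trans_eq ?_) _)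
    rw [abs_mul, abs_of_nonneg (by linarith : 0 ≤ (γ - 1) / 2)]
  have hK : (γ - 1) / 2 * |K| ≤ (γ - 1) / 2 * (2 * (u ^ 2 + c ^ 2) * W) :=
    mul_le_mul_of_nonneg_left hGc (by linarith)
  calc _ ≤ ρ * (|G| + |A * u|) + ρ * (|G| + (γ - 1) / 2 * |K| + |A * u|) := by gcongr
    _ = ρ * (2 * |G| + 2 * |A * u| + (γ - 1) / 2 * |K|) := by ring
    _ ≤ ρ * ((4 + (γ - 1)) * W * (u ^ 2 + 1 + c ^ 2)) := by
        refine mul_le_mul_of_nonneg_left ?_ hρ.le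
        have p1 : 0 ≤ W * c ^ 2 := by positivity
        have p2 : 0 ≤ (γ - 1) * W := mul_nonneg (by linarith) hW
        nlinarith
    _ = _ := by ring

/-- there is `M > 0` depending only on `γ` such that for all `ρ̄ ∈ (0,1]`,
`ρ > 0` and `m ∈ ℝ`, with `u = m/ρ`,
`|η̃(ρ,m)| + ρ|η̃_ρ(ρ,m) + u η̃_m(ρ,m)| ≤ M(ρ|u|² + ρ + ρ^γ)`. -/
theorem etaTilde_bounds (γ : ℝ) (hγ : 1 < γ) :
    ∃ M : ℝ, 0 < M ∧ ∀ ρbar ∈ Set.Ioc (0:ℝ) 1, ∀ ρ : ℝ, 0 < ρ → ∀ m : ℝ,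
      |etaTilde γ ρbar ρ m|
        + ρ * |etaTildeRho γ ρbar ρ m + (m / ρ) * etaTildeM γ ρbar ρ m|
        ≤ M * (ρ * |m / ρ| ^ (2:ℕ) + ρ + ρ ^ γ) := by
  rcases eq_or_ne γ 3 with rfl | hγ3
  · refine ⟨1, one_pos, fun ρbar _ ρ hρ m => ?_⟩
    have h : ∀ x y, etaTilde 3 ρbar x y = 0 := fun x y => by
      simp [etaTilde, etaCheckRho, etaCheckM, etaCheck_three]
    simp only [etaTildeRho, etaTildeM, h, deriv_const]
    simp only [abs_zero, mul_zero, add_zero, one_mul]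
    positivity
  · have hW : 0 ≤ ∫ t, kernelProfile ((3 - γ) / (2 * (γ - 1))) t :=
      integral_nonneg (kernelProfile_nonneg _)
    have hC : 0 ≤ (4 + (γ - 1)) * ∫ t, kernelProfile ((3 - γ) / (2 * (γ - 1))) t :=
      mul_nonneg (by linarith) hW
    refine ⟨(4 + (γ - 1)) * (∫ t, kernelProfile ((3 - γ) / (2 * (γ - 1))) t) + 1, by linarith,
      fun ρbar hρbar ρ hρ m => (abs_etaTilde_add_le hγ hγ3 hρbar hρ m).trans ?_⟩
    exact mul_le_mul_of_nonneg_right (by linarith) (by positivity)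
end
end

section
/- Under the Entropy Setup, with ρ̄ ∈ (0,1], there exists a constant M > 0 depending only on γ such that for all ρ > 0 and m ∈ ℝ with u = m/ρ, |m η̃_m(ρ,m)| ≤ M(ρu² + ρ^γ + ρρ̄^{2θ}), where η̃_m(ρ,m) = η̌_m(ρ,m) − η̌_m(ρ̄,0). -/
open MeasureTheory Real Set

noncomputable section

/-- The normalized kernel `[1 - σ²]_+^l`. -/
def unitKernel (l σ : ℝ) : ℝ := (max (1 - σ ^ (2:ℕ)) 0) ^ l

lemma unitKernel_nonneg (l σ : ℝ) : 0 ≤ unitKernel l σ :=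
  rpow_nonneg (le_max_right _ _) _

lemma unitKernel_eq_zero {l σ : ℝ} (hl : l ≠ 0) (hσ : 1 ≤ |σ|) : unitKernel l σ = 0 := by
  have h : 1 - σ ^ 2 ≤ 0 := by
    rw [← sq_abs]; nlinarith
  rw [unitKernel, max_eq_right h, zero_rpow hl]

lemma measurable_unitKernel (l : ℝ) : Measurable (unitKernel l) := by
  unfold unitKernel
  fun_prop

lemma unitKernel_le {l σ : ℝ} (hσ : |σ| < 1) :
    unitKernel l σ ≤ 1 + (1 - σ) ^ l + (1 + σ) ^ l := by
  obtain ⟨h1, h2⟩ := abs_lt.mp hσ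
  have hpos : 0 < 1 - σ ^ 2 := by nlinarith
  have ha : 0 ≤ (1 - σ) ^ l := rpow_nonneg (by linarith) _
  have hb : 0 ≤ (1 + σ) ^ l := rpow_nonneg (by linarith) _
  rw [unitKernel, max_eq_left hpos.le]
  rcases le_total 0 l with hl | hl
  · have := rpow_le_one hpos.le (by nlinarith [sq_nonneg σ]) hl
    linarith
  · rcases le_total 0 σ with hs | hs
    · have := rpow_le_rpow_of_nonpos (show 0 < 1 - σ by linarith)
        (show 1 - σ ≤ 1 - σ ^ 2 by nlinarith) hl
      linarith
    · have := rpow_le_rpow_of_nonpos (show 0 < 1 + σ by linarith)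
        (show 1 + σ ≤ 1 - σ ^ 2 by nlinarith) hl
      linarith

lemma integrable_unitKernel {l : ℝ} (hl : -1 < l) (hl0 : l ≠ 0) :
    Integrable (unitKernel l) := by
  have hbase : IntervalIntegrable (fun x : ℝ => x ^ l) volume 0 2 :=
    intervalIntegral.intervalIntegrable_rpow' hl
  have hsub : IntervalIntegrable (fun x : ℝ => (1 - x) ^ l) volume (-1) 1 := by
    have := (hbase.comp_sub_left 1).symm
    norm_num at this
    exact this
  have hadd : IntervalIntegrable (fun x : ℝ => (1 + x) ^ l) volume (-1) 1 := by
    have := hbase.comp_add_left 1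
    norm_num at this
    exact this
  have hdom : IntegrableOn (fun x : ℝ => 1 + (1 - x) ^ l + (1 + x) ^ l) (Ioo (-1) 1) := by
    have := ((intervalIntegrable_const (c := (1:ℝ))).add hsub).add hadd
    rw [intervalIntegrable_iff_integrableOn_Ioo_of_le (by norm_num)] at this
    exact this
  have hon : IntegrableOn (unitKernel l) (Ioo (-1) 1) := by
    refine Integrable.mono' hdom (measurable_unitKernel l).aestronglyMeasurable ?_
    filter_upwards [ae_restrict_mem measurableSet_Ioo] with x hx
    rw [norm_of_nonneg (unitKernel_nonneg l x)]
    exact unitKernel_le (abs_lt.mpr hx)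
  refine (integrableOn_iff_integrable_of_support_subset ?_).mp hon
  intro x hx
  by_contra h
  exact hx (unitKernel_eq_zero hl0 (not_lt.mp fun h' => h (abs_lt.mp h')))

lemma abs_half_mul_abs_sub_le (x y : ℝ) :
    |(1/2) * x * |x| - (1/2) * y * (|y|)| ≤ (|x| + |y|) * |x - y| := by
  have h : (1/2) * x * |x| - (1/2) * y * |y|
      = (1/2) * ((x - y) * |x| + y * (|x| - |y|)) := by ring
  have h1 : |(x - y) * |x| + y * (|x| - |y|)| ≤ |x - y| * |x| + |y| * |x - y| := by
    refine (abs_add_le _ _).trans ?_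
    rw [abs_mul, abs_mul, abs_abs]
    have := mul_le_mul_of_nonneg_left (abs_abs_sub_abs_le x y) (abs_nonneg y)
    linarith
  rw [h, abs_mul, abs_of_pos (by norm_num : (0:ℝ) < 1/2)]
  nlinarith [abs_nonneg ((x - y) * |x| + y * (|x| - |y|))]

lemma integrable_half_mul_abs_mul_unitKernel {l : ℝ} (hl : -1 < l) (hl0 : l ≠ 0) (u a : ℝ) :
    Integrable fun σ => (1/2) * (u + a * σ) * |u + a * σ| * unitKernel l σ := by
  refine Integrable.mono' ((integrable_unitKernel hl hl0).const_mul ((|u| + |a|) ^ 2)) ?_ ?_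
  · have := measurable_unitKernel l
    fun_prop
  · refine Filter.Eventually.of_forall fun σ => ?_
    rcases le_or_gt 1 |σ| with hσ | hσ
    · simp [unitKernel_eq_zero hl0 hσ]
    · rw [norm_mul, norm_of_nonneg (unitKernel_nonneg l σ)]
      refine mul_le_mul_of_nonneg_right ?_ (unitKernel_nonneg l σ)
      have h : |u + a * σ| ≤ |u| + |a| := by
        refine (abs_add_le _ _).trans ?_
        rw [abs_mul]
        nlinarith [abs_nonneg a]
      rw [norm_eq_abs, abs_mul, abs_mul, abs_abs, abs_of_pos (by norm_num : (0:ℝ) < 1/2)]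
      nlinarith [abs_nonneg (u + a * σ)]

lemma etaCheck_eq_integral_unitKernel {γ ρ : ℝ} (hγ : 1 < γ) (hρ : 0 < ρ) (m : ℝ) :
    etaCheck γ ρ m = ρ * ∫ σ : ℝ, (1/2) * (m / ρ + ρ ^ ((γ - 1) / 2) * σ) *
      |m / ρ + ρ ^ ((γ - 1) / 2) * σ| * unitKernel ((3 - γ) / (2 * (γ - 1))) σ := by
  set l := (3 - γ) / (2 * (γ - 1)) with hl
  set a := ρ ^ ((γ - 1) / 2) with ha
  have hapos : 0 < a := rpow_pos_of_pos hρ _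
  have hasq : ρ ^ (γ - 1) = a ^ 2 := by
    rw [ha, ← rpow_natCast, ← rpow_mul hρ.le]; congr 1; push_cast; ring
  have hscale : a * (a ^ 2) ^ l = ρ := by
    rw [← hasq, ha, ← rpow_mul hρ.le, ← rpow_add hρ]
    have : (γ - 1) / 2 + (γ - 1) * l = 1 := by
      have : γ - 1 ≠ 0 := by linarith
      rw [hl]; field_simp; ring
    rw [this, rpow_one]
  have hpt : ∀ σ : ℝ, (1/2) * (m / ρ + a * σ) * |m / ρ + a * σ| *
      (max (ρ ^ (γ - 1) - (m / ρ - (m / ρ + a * σ)) ^ (2:ℕ)) 0) ^ l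
      = (a ^ 2) ^ l * ((1/2) * (m / ρ + a * σ) * |m / ρ + a * σ| * unitKernel l σ) := by
    intro σ
    have : max (ρ ^ (γ - 1) - (m / ρ - (m / ρ + a * σ)) ^ (2:ℕ)) 0
        = a ^ 2 * max (1 - σ ^ 2) 0 := by
      rw [hasq, mul_max_of_nonneg _ _ (sq_nonneg a)]
      congr 1 <;> ring
    rw [this, mul_rpow (sq_nonneg a) (le_max_right _ _), unitKernel]
    ring
  rw [etaCheck, ← integral_add_left_eq_self _ (m / ρ)]
  have hcv := Measure.integral_comp_mul_left (fun t : ℝ => (1/2) * (m / ρ + t) * |m / ρ + t| *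
      (max (ρ ^ (γ - 1) - (m / ρ - (m / ρ + t)) ^ (2:ℕ)) 0) ^ l) a
  simp only [hpt] at hcv
  rw [integral_const_mul, abs_of_pos (inv_pos.mpr hapos), smul_eq_mul,
    eq_inv_mul_iff_mul_eq₀ hapos.ne', ← mul_assoc, hscale] at hcv
  exact hcv.symm

lemma abs_etaCheckM_le {γ ρ : ℝ} (hγ : 1 < γ) (hγ3 : γ ≠ 3) (hρ : 0 < ρ) (m : ℝ) :
    |etaCheckM γ ρ m| ≤ (∫ σ, unitKernel ((3 - γ) / (2 * (γ - 1))) σ) *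
      (2 * |m / ρ| + 3 * ρ ^ ((γ - 1) / 2)) := by
  have hl0 : (3 - γ) / (2 * (γ - 1)) ≠ 0 :=
    div_ne_zero (sub_ne_zero.mpr hγ3.symm) (by linarith)
  have hl : -1 < (3 - γ) / (2 * (γ - 1)) := by
    rw [lt_div_iff₀ (by linarith)]; linarith
  have heq := etaCheck_eq_integral_unitKernel hγ hρ
  set l := (3 - γ) / (2 * (γ - 1))
  set a := ρ ^ ((γ - 1) / 2)
  have ha : 0 < a := rpow_pos_of_pos hρ _
  have hI : 0 ≤ ∫ σ, unitKernel l σ := integral_nonneg (unitKernel_nonneg l)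
  rw [etaCheckM, ← norm_eq_abs]
  refine norm_deriv_le_of_lip' (by positivity) ?_
  filter_upwards [Metric.ball_mem_nhds m (mul_pos hρ ha)] with y hy
  rw [Metric.mem_ball, Real.dist_eq] at hy
  have hdiff : |y / ρ - m / ρ| = |y - m| / ρ := by
    rw [← sub_div, abs_div, abs_of_pos hρ]
  have hclose : |y / ρ - m / ρ| ≤ a := by
    rw [hdiff, div_le_iff₀ hρ]; linarith
  have hy' : |y / ρ| ≤ |m / ρ| + a := by
    linarith [abs_sub_abs_le_abs_sub (y / ρ) (m / ρ)]
  rw [heq y, heq m, ← mul_sub, ← integral_sub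
    (integrable_half_mul_abs_mul_unitKernel hl hl0 _ _)
    (integrable_half_mul_abs_mul_unitKernel hl hl0 _ _), norm_mul, norm_of_nonneg hρ.le]
  have hbound := norm_integral_le_of_norm_le
    (f := fun σ => (1/2) * (y / ρ + a * σ) * |y / ρ + a * σ| * unitKernel l σ
      - (1/2) * (m / ρ + a * σ) * |m / ρ + a * σ| * unitKernel l σ)
    ((integrable_unitKernel hl hl0).const_mul ((2 * |m / ρ| + 3 * a) * (|y - m| / ρ)))
    (Filter.Eventually.of_forall fun σ => by
      rcases le_or_gt 1 |σ| with hσ | hσ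
      · simp [unitKernel_eq_zero hl0 hσ]
      · rw [← sub_mul, norm_mul, norm_of_nonneg (unitKernel_nonneg l σ), norm_eq_abs]
        refine mul_le_mul_of_nonneg_right ?_ (unitKernel_nonneg l σ)
        refine (abs_half_mul_abs_sub_le _ _).trans ?_
        rw [add_sub_add_right_eq_sub, hdiff]
        have haσ : |a * σ| ≤ a := by
          rw [abs_mul, abs_of_pos ha]; nlinarith
        have h1 := abs_add_le (y / ρ) (a * σ)
        have h2 := abs_add_le (m / ρ) (a * σ)
        exact mul_le_mul_of_nonneg_right (by linarith) (by positivity))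
  rw [integral_const_mul] at hbound
  calc _ ≤ ρ * ((2 * |m / ρ| + 3 * a) * (|y - m| / ρ) * ∫ σ, unitKernel l σ) := by gcongr
    _ = _ := by rw [norm_eq_abs]; field_simp

lemma etaCheckM_three (ρ m : ℝ) : etaCheckM 3 ρ m = 0 := by
  simp [etaCheckM, etaCheck]

/-- there is `M > 0` depending only on `γ` such that for all `ρ̄ ∈ (0,1]`,
`ρ > 0`, `m ∈ ℝ` with `u = m/ρ`,
`|m η̃_m(ρ,m)| ≤ M(ρu² + ρ^γ + ρρ̄^{2θ})`, where `η̃_m(ρ,m) = η̌_m(ρ,m) − η̌_m(ρ̄,0)`. -/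
theorem m_etaTildeM_bound (γ : ℝ) (hγ : 1 < γ) :
    ∃ M : ℝ, 0 < M ∧ ∀ ρbar ∈ Set.Ioc (0:ℝ) 1, ∀ ρ : ℝ, 0 < ρ → ∀ m : ℝ,
      |m * (etaCheckM γ ρ m - etaCheckM γ ρbar 0)|
        ≤ M * (ρ * (m / ρ) ^ (2:ℕ) + ρ ^ γ + ρ * ρbar ^ (γ - 1)) := by
  rcases eq_or_ne γ 3 with rfl | hγ3
  · refine ⟨1, one_pos, fun ρbar hbar ρ hρ m => ?_⟩
    have hb := hbar.1
    simp only [etaCheckM_three, sub_zero, mul_zero, abs_zero]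
    positivity
  set I := ∫ σ, unitKernel ((3 - γ) / (2 * (γ - 1))) σ with hIdef
  have hI : 0 ≤ I := integral_nonneg (unitKernel_nonneg _)
  refine ⟨5 * I + 1, by positivity, fun ρbar hbar ρ hρ m => ?_⟩
  have hb := hbar.1
  have hsq : ∀ x : ℝ, 0 < x → x ^ (γ - 1) = (x ^ ((γ - 1) / 2)) ^ 2 := fun x hx => by
    rw [← rpow_natCast, ← rpow_mul hx.le]; congr 1; push_cast; ring
  have hργ : ρ ^ γ = ρ * (ρ ^ ((γ - 1) / 2)) ^ 2 := by
    rw [← hsq ρ hρ, rpow_sub_one hρ.ne']; field_simp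
  have h1 := abs_etaCheckM_le hγ hγ3 hρ m
  have h2 := abs_etaCheckM_le hγ hγ3 hb 0
  rw [← hIdef] at h1 h2
  rw [zero_div, abs_zero] at h2
  rw [hργ, hsq ρbar hb]
  set a := ρ ^ ((γ - 1) / 2)
  set b := ρbar ^ ((γ - 1) / 2)
  have hm : |m| = ρ * |m / ρ| := by
    rw [abs_div, abs_of_pos hρ]; field_simp
  rw [abs_mul, hm, ← sq_abs (m / ρ)]
  set v := |m / ρ|
  have hv : 0 ≤ v := abs_nonneg _
  have hquad : v * (2 * v + 3 * a + 3 * b) ≤ 5 * (v ^ 2 + a ^ 2 + b ^ 2) := by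
    nlinarith [sq_nonneg (v - a), sq_nonneg (v - b)]
  calc ρ * v * |etaCheckM γ ρ m - etaCheckM γ ρbar 0|
      ≤ ρ * v * (I * (2 * v + 3 * a + 3 * b)) := by
        gcongr
        refine (abs_sub _ _).trans ?_
        linarith
    _ = ρ * I * (v * (2 * v + 3 * a + 3 * b)) := by ring
    _ ≤ ρ * I * (5 * (v ^ 2 + a ^ 2 + b ^ 2)) := by gcongr
    _ ≤ (5 * I + 1) * (ρ * v ^ 2 + ρ * a ^ 2 + ρ * b ^ 2) := by
        have : 0 ≤ ρ * v ^ 2 + ρ * a ^ 2 + ρ * b ^ 2 := by positivity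
        linarith
end
end
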